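/- Let f : ℝ → ℝ be Lipschitz continuous, 2π-periodic, with f(θ) ≥ m for some m > 0 and all θ, let θ : ℝ → ℝ solve θ̇ = f(θ), and set T := ∫₀^{2π} ds / f(s) and ω := 2π/T. Then for every k ∈ ℤ the time average of e^{−ikθ} over one period equals the phase average weighted by the density ω/(2π f): (1/T) ∫₀^{T} e^{−ikθ(t)} dt = (1/2π) ∫₀^{2π} e^{−iks} (ω/f(s)) ds. -/

import Mathlib

/-- For a protophase `θ̇ = f(θ)` with `f` Lipschitz, 2π-periodic and
`≥ m > 0`, with `T = ∫₀^{2π} ds/f(s)` and `ω = 2π/T`, the time average of `e^{−ikθ}`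
over one period equals the phase average weighted by the density `ω/(2πf)`:
`(1/T)∫₀^T e^{−ikθ(t)} dt = (1/2π)∫₀^{2π} e^{−iks}(ω/f(s)) ds`. -/
theorem protophase_density_time_average
    (f : ℝ → ℝ) (K : NNReal) (hf : LipschitzWith K f)
    (hper : ∀ x, f (x + 2 * Real.pi) = f x)
    (m : ℝ) (hm : 0 < m) (hfm : ∀ x, m ≤ f x)
    (θ : ℝ → ℝ) (hode : ∀ t, HasDerivAt θ (f (θ t)) t)
    (T ω : ℝ) (hT : T = ∫ s in (0 : ℝ)..(2 * Real.pi), 1 / f s)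
    (hω : ω = 2 * Real.pi / T) :
    ∀ k : ℤ,
      (1 / (T : ℂ)) * ∫ t in (0 : ℝ)..T, Complex.exp (-Complex.I * (k : ℂ) * (θ t : ℂ))
        = (1 / (2 * Real.pi) : ℂ) *
          ∫ s in (0 : ℝ)..(2 * Real.pi),
            Complex.exp (-Complex.I * (k : ℂ) * (s : ℂ)) * ((ω / f s : ℝ) : ℂ) := by
  intro k
  have hpos : ∀ x, 0 < f x := fun x => hm.trans_le (hfm x)
  have hfc : Continuous f := hf.continuous
  have hθc : Continuous θ := continuous_iff_continuousAt.2 fun t => (hode t).continuousAt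
  have hgc : Continuous fun s => 1 / f s :=
    continuous_const.div hfc fun x => (hpos x).ne'
  have hgi : ∀ a b, IntervalIntegrable (fun s => 1 / f s) MeasureTheory.volume a b :=
    fun a b => hgc.intervalIntegrable a b
  have hgper : Function.Periodic (fun s => 1 / f s) (2 * Real.pi) := fun x => by
    simp only [hper]
  have h1 : ∫ s in θ 0..θ T, 1 / f s = T := by
    rw [← intervalIntegral.integral_comp_mul_deriv (f := θ) (f' := fun t => f (θ t))
      (fun x _ => hode x) (hfc.comp hθc).continuousOn hgc]
    have : (fun x => ((fun s => 1 / f s) ∘ θ) x * f (θ x)) = fun _ => (1 : ℝ) := by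
      funext x
      have := (hpos (θ x)).ne'
      simp only [Function.comp]
      field_simp
    rw [this]
    simp
  have h2 : ∫ s in θ 0..θ 0 + 2 * Real.pi, 1 / f s = T := by
    rw [hgper.intervalIntegral_add_eq (θ 0) 0, hT, zero_add]
  have hend : θ T = θ 0 + 2 * Real.pi := by
    have h3 := intervalIntegral.integral_interval_sub_left (hgi (θ 0) (θ T))
      (hgi (θ 0) (θ 0 + 2 * Real.pi))
    rw [h1, h2, sub_self] at h3
    rcases lt_trichotomy (θ T) (θ 0 + 2 * Real.pi) with h | h | h
    · have := intervalIntegral.intervalIntegral_pos_of_pos (hgi _ _)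
        (fun x => one_div_pos.2 (hpos x)) h
      rw [intervalIntegral.integral_symm] at this
      linarith
    · exact h
    · have := intervalIntegral.intervalIntegral_pos_of_pos (hgi _ _)
        (fun x => one_div_pos.2 (hpos x)) h
      linarith
  set G : ℝ → ℂ := fun s =>
    Complex.exp (-Complex.I * (k : ℂ) * (s : ℂ)) * ((1 / f s : ℝ) : ℂ) with hG
  have hGc : Continuous G := by
    have := Complex.continuous_ofReal.comp hgc
    exact Continuous.mul (by fun_prop) this
  have hGper : Function.Periodic G (2 * Real.pi) := fun x => by
    simp only [hG, hper]
    congr 1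
    rw [Complex.exp_eq_exp_iff_exists_int]
    exact ⟨-k, by push_cast; ring⟩
  have h4 : ∫ t in (0 : ℝ)..T, Complex.exp (-Complex.I * (k : ℂ) * (θ t : ℂ))
      = ∫ s in (0 : ℝ)..(2 * Real.pi), G s := by
    have h5 := intervalIntegral.integral_deriv_smul_comp (a := 0) (b := T) (f := θ)
      (f' := fun t => f (θ t)) (g := G)
      (fun x _ => hode x) (hfc.comp hθc).continuousOn hGc
    rw [hend, hGper.intervalIntegral_add_eq (θ 0) 0, zero_add] at h5
    rw [← h5]
    congr 1
    funext x
    have : (f (θ x) : ℂ) ≠ 0 := by exact_mod_cast (hpos (θ x)).ne'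
    simp only [Function.comp, hG, Complex.real_smul]
    push_cast
    field_simp
  have h6 : ∀ s : ℝ, Complex.exp (-Complex.I * (k : ℂ) * (s : ℂ)) * ((ω / f s : ℝ) : ℂ)
      = (ω : ℂ) * G s := fun s => by
    simp only [hG]
    push_cast
    ring
  simp only [h6]
  rw [h4, intervalIntegral.integral_const_mul, hω, ← mul_assoc]
  congr 1
  have : (Real.pi : ℂ) ≠ 0 := by exact_mod_cast Real.pi_ne_zero
  push_cast
  field_simp
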